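/- arXiv:1005.1839 — 5 statements merged into one kernel-verified Lean document; each statement's English description precedes it below -/
import Mathlib

section
/- There exists a finite group G with subgroups A and B such that A and B are Gassmann equivalent (for every conjugacy class C of G, |A ∩ C| = |B ∩ C|) but A and B are not conjugate in G. -/
/-!
In the symmetric group on six points there are two ways to embed the Klein four-group with every
nonidentity element a product of two disjoint transpositions: regularly on four of the points, so
that the other two are fixed, or with the three orbits `{0, 1}`, `{2, 3}`, `{4, 5}`, so that no
point is fixed. The images have the same order and their nonidentity elements all lie in one
conjugacy class, so they are Gassmann equivalent; but having a fixed point is invariant under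
conjugation.
-/

open Equiv Subgroup MulAction

section Gassmann

variable {G : Type*} [Group G]

/-- Gassmann equivalence of subgroups: each conjugacy class, given by a representative `g`, meets
`A` and `B` in the same number of elements. As `Nat.card` is `0` on infinite types, this is
the intended notion only when these intersections are finite. -/
def GassmannEquivalent (A B : Subgroup G) : Prop :=
  ∀ g : G,
    Nat.card ((A : Set G) ∩ {x : G | IsConj g x} : Set G) =
    Nat.card ((B : Set G) ∩ {x : G | IsConj g x} : Set G)

theorem GassmannEquivalent.of_equiv {A B : Subgroup G} (e : A ≃ B)
    (he : ∀ a : A, IsConj (a : G) (e a)) : GassmannEquivalent A B := by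
  intro g
  have e_conj : ∀ a : A, IsConj g a ↔ IsConj g (e a) := fun a =>
    ⟨fun h => h.trans (he a), fun h => h.trans (he a).symm⟩
  exact Nat.card_congr <|
    (subtypeSubtypeEquivSubtypeInter (· ∈ A) (IsConj g)).symm.trans <|
      (e.subtypeEquiv e_conj).trans <| subtypeSubtypeEquivSubtypeInter (· ∈ B) (IsConj g)

theorem GassmannEquivalent.of_card_eq_of_forall_isConj {A B : Subgroup G}
    [Finite A] [Finite B] (hcard : Nat.card A = Nat.card B)
    (hconj : ∀ a ∈ A, a ≠ 1 → ∀ b ∈ B, b ≠ 1 → IsConj a b) : GassmannEquivalent A B := by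
  classical
  obtain ⟨f⟩ := Finite.card_eq.mp hcard
  let e : A ≃ B := f.setValue 1 1
  have e_one : e 1 = 1 := setValue_eq _ _ _
  refine .of_equiv e fun a => ?_
  obtain rfl | ha := eq_or_ne a 1
  · rw [e_one]
    exact IsConj.refl 1
  · have hea : e a ≠ 1 := e_one ▸ e.injective.ne ha
    exact hconj a a.2 (mt OneMemClass.coe_eq_one.mp ha) (e a) (e a).2
      (mt OneMemClass.coe_eq_one.mp hea)

theorem map_conj_le_stabilizer_smul {α : Type*} [MulAction G α] {A : Subgroup G} {p : α}
    (hA : A ≤ stabilizer G p) (x : G) :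
    A.map (MulAut.conj x).toMonoidHom ≤ stabilizer G (x • p) :=
  stabilizer_smul_eq_stabilizer_map_conj x p ▸ map_mono hA

end Gassmann

section KleinFour

variable {G : Type*} [Group G] {a b : G}

theorem coe_closure_pair_of_sq_eq_one (ha : a ^ 2 = 1) (hb : b ^ 2 = 1) (hab : Commute a b) :
    (closure {a, b} : Set G) = {1, a, b, a * b} := by
  have haa : a * a = 1 := by rw [← sq, ha]
  have hbb : b * b = 1 := by rw [← sq, hb]
  have haab : a * (a * b) = b := by rw [← mul_assoc, haa, one_mul]
  have hbab : b * (a * b) = a := by rw [hab.eq, ← mul_assoc, hbb, one_mul]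
  have a_mem : a ∈ closure {a, b} := subset_closure (by simp)
  have b_mem : b ∈ closure {a, b} := subset_closure (by simp)
  refine Set.Subset.antisymm (fun x hx => ?_) ?_
  · induction hx using closure_induction with
    | mem x hx => rcases hx with rfl | rfl <;> simp
    | one => simp
    | mul x y _ _ hx hy =>
      rcases hx with rfl | rfl | rfl | rfl <;> rcases hy with rfl | rfl | rfl | rfl <;>
        simp [haa, hbb, haab, hbab, mul_assoc, ← hab.eq]
    | inv x _ hx =>
      have ha' : a⁻¹ = a := inv_eq_of_mul_eq_one_left haa
      have hb' : b⁻¹ = b := inv_eq_of_mul_eq_one_left hbb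
      rcases hx with rfl | rfl | rfl | rfl <;> simp [ha', hb', ← hab.eq]
  · rintro x (rfl | rfl | rfl | rfl)
    exacts [one_mem _, a_mem, b_mem, mul_mem a_mem b_mem]

theorem natCard_closure_pair_of_sq_eq_one (ha : a ^ 2 = 1) (hb : b ^ 2 = 1) (hab : Commute a b)
    (ha1 : a ≠ 1) (hb1 : b ≠ 1) (hne : a ≠ b) : Nat.card (closure {a, b}) = 4 := by
  have hab1 : a * b ≠ 1 := fun h => hne (mul_left_cancel ((sq a).symm.trans (ha.trans h.symm)))
  rw [← SetLike.coe_sort_coe, coe_closure_pair_of_sq_eq_one ha hb hab, Nat.card_coe_set_eq,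
    Set.ncard_insert_of_notMem (by simp [ha1.symm, hb1.symm, hab1.symm]),
    Set.ncard_insert_of_notMem (by simp [hne, hb1]),
    Set.ncard_pair (by simpa using ha1)]

end KleinFour

/-- The Klein four-group acting regularly on the points `0, 1, 2, 3` and fixing `4` and `5`. -/
def fourPointKleinFour : Subgroup (Perm (Fin 6)) :=
  closure {swap 0 1 * swap 2 3, swap 0 2 * swap 1 3}

/-- The Klein four-group acting with the three orbits `{0, 1}`, `{2, 3}` and `{4, 5}`. -/
def sixPointKleinFour : Subgroup (Perm (Fin 6)) :=
  closure {swap 0 1 * swap 2 3, swap 0 1 * swap 4 5}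

theorem coe_fourPointKleinFour : (fourPointKleinFour : Set (Perm (Fin 6))) =
    {1, swap 0 1 * swap 2 3, swap 0 2 * swap 1 3, swap 0 3 * swap 1 2} := by
  have product_eq : (swap 0 1 * swap 2 3 * (swap 0 2 * swap 1 3) : Perm (Fin 6)) =
      swap 0 3 * swap 1 2 := by decide
  rw [fourPointKleinFour, coe_closure_pair_of_sq_eq_one (by decide) (by decide)
    ((commute_iff_eq _ _).mpr (by decide)), product_eq]

theorem coe_sixPointKleinFour : (sixPointKleinFour : Set (Perm (Fin 6))) =
    {1, swap 0 1 * swap 2 3, swap 0 1 * swap 4 5, swap 2 3 * swap 4 5} := by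
  have product_eq : (swap 0 1 * swap 2 3 * (swap 0 1 * swap 4 5) : Perm (Fin 6)) =
      swap 2 3 * swap 4 5 := by decide
  rw [sixPointKleinFour, coe_closure_pair_of_sq_eq_one (by decide) (by decide)
    ((commute_iff_eq _ _).mpr (by decide)), product_eq]

theorem natCard_fourPointKleinFour : Nat.card fourPointKleinFour = 4 :=
  natCard_closure_pair_of_sq_eq_one (by decide) (by decide)
    ((commute_iff_eq _ _).mpr (by decide)) (by decide) (by decide) (by decide)

theorem natCard_sixPointKleinFour : Nat.card sixPointKleinFour = 4 :=
  natCard_closure_pair_of_sq_eq_one (by decide) (by decide)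
    ((commute_iff_eq _ _).mpr (by decide)) (by decide) (by decide) (by decide)

theorem cycleType_of_mem_fourPointKleinFour {σ : Perm (Fin 6)} (hσ : σ ∈ fourPointKleinFour)
    (hσ1 : σ ≠ 1) : σ.cycleType = {2, 2} := by
  rw [← SetLike.mem_coe, coe_fourPointKleinFour] at hσ
  rcases hσ with rfl | rfl | rfl | rfl
  · exact absurd rfl hσ1
  all_goals exact Perm.cycleType_swap_mul_swap_of_nodup (by decide)

theorem cycleType_of_mem_sixPointKleinFour {σ : Perm (Fin 6)}
    (hσ : σ ∈ sixPointKleinFour) (hσ1 : σ ≠ 1) : σ.cycleType = {2, 2} := by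
  rw [← SetLike.mem_coe, coe_sixPointKleinFour] at hσ
  rcases hσ with rfl | rfl | rfl | rfl
  · exact absurd rfl hσ1
  all_goals exact Perm.cycleType_swap_mul_swap_of_nodup (by decide)

theorem gassmannEquivalent_fourPointKleinFour_sixPointKleinFour :
    GassmannEquivalent fourPointKleinFour sixPointKleinFour :=
  .of_card_eq_of_forall_isConj
    (natCard_fourPointKleinFour.trans natCard_sixPointKleinFour.symm)
    fun _ hσ hσ1 _ hτ hτ1 => Perm.isConj_of_cycleType_eq <|
      (cycleType_of_mem_fourPointKleinFour hσ hσ1).trans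
        (cycleType_of_mem_sixPointKleinFour hτ hτ1).symm

theorem fourPointKleinFour_le_stabilizer :
    fourPointKleinFour ≤ stabilizer (Perm (Fin 6)) (4 : Fin 6) := by
  rw [fourPointKleinFour, closure_le]
  rintro σ (rfl | rfl) <;> exact mem_stabilizer_iff.mpr (by decide)

theorem not_sixPointKleinFour_le_stabilizer (i : Fin 6) :
    ¬ sixPointKleinFour ≤ stabilizer (Perm (Fin 6)) i := by
  have moved : ∀ j : Fin 6, (swap 0 1 * swap 2 3 : Perm (Fin 6)) j ≠ j ∨
      (swap 0 1 * swap 4 5 : Perm (Fin 6)) j ≠ j := by decide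
  intro h
  rcases moved i with hi | hi
  · exact hi (h (subset_closure (by simp)))
  · exact hi (h (subset_closure (by simp)))

/-- There is a finite group with two Gassmann equivalent subgroups that are not conjugate. -/
theorem exists_gassmann_not_conjugate :
    ∃ (G : Type) (_ : Group G) (_ : Fintype G) (A B : Subgroup G),
      (∀ g : G,
        Nat.card ((A : Set G) ∩ {x : G | IsConj g x} : Set G) =
        Nat.card ((B : Set G) ∩ {x : G | IsConj g x} : Set G)) ∧
      ¬ ∃ x : G, Subgroup.map (MulAut.conj x).toMonoidHom A = B := by
  refine ⟨Perm (Fin 6), inferInstance, inferInstance, fourPointKleinFour, sixPointKleinFour,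
    gassmannEquivalent_fourPointKleinFour_sixPointKleinFour, ?_⟩
  rintro ⟨x, hx⟩
  exact not_sixPointKleinFour_le_stabilizer (x • 4)
    (hx ▸ map_conj_le_stabilizer_smul fourPointKleinFour_le_stabilizer x)
end

section
/- Let a, b, c be the permutations of {0,…,6} given in cycle notation by a = (0 1)(2 5), b = (0 2)(4 3), c = (0 4)(1 6), and let a' = (0 4)(2 3), b' = (0 1)(4 6), c' = (0 2)(1 5). Let G be the subgroup of Sym(7) × Sym(7) generated by (a,a'), (b,b'), (c,c'). Then for every element (σ,τ) ∈ G, the number of fixed points of σ on {0,…,6} equals the number of fixed points of τ on {0,…,6}. -/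
open Equiv

/-- a = (0 1)(2 5) -/
def a : Perm (Fin 7) := swap 0 1 * swap 2 5
/-- b = (0 2)(4 3) -/
def b : Perm (Fin 7) := swap 0 2 * swap 4 3
/-- c = (0 4)(1 6) -/
def c : Perm (Fin 7) := swap 0 4 * swap 1 6
/-- a' = (0 4)(2 3) -/
def a' : Perm (Fin 7) := swap 0 4 * swap 2 3
/-- b' = (0 1)(4 6) -/
def b' : Perm (Fin 7) := swap 0 1 * swap 4 6
/-- c' = (0 2)(1 5) -/
def c' : Perm (Fin 7) := swap 0 2 * swap 1 5

/-- The subgroup of Sym(7) × Sym(7) generated by (a,a'), (b,b'), (c,c'). -/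
def G₀ : Subgroup (Perm (Fin 7) × Perm (Fin 7)) :=
  Subgroup.closure {(a, a'), (b, b'), (c, c')}

/-!
The two actions are those of `L₃(2)` on the points and the lines of the Fano plane, so every
`(σ, τ) ∈ G₀` preserves the incidence relation, i.e. its permutation matrices satisfy
`P_σ N = N P_τ` for the incidence matrix `N`. Two distinct points lie on exactly one line and every
point lies on three, so `N Nᵀ = 2 I + J` is positive definite, and `N` is invertible. Hence `P_σ`
and `P_τ` are similar, and their traces, which count fixed points, agree (Brauer's permutation
lemma).
-/

open Finset Matrix

section BrauerPermutationLemma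

variable {R m n : Type*} [Fintype m] [Fintype n]

theorem trace_eq_of_mul_eq_mul [CommSemiring R] [DecidableEq m] [DecidableEq n]
    {A : Matrix m n R} {B : Matrix n m R} {P : Matrix m m R} {Q : Matrix n n R}
    (hAB : A * B = 1) (hBA : B * A = 1) (h : P * A = A * Q) : P.trace = Q.trace :=
  calc P.trace = (P * A * B).trace := by rw [Matrix.mul_assoc, hAB, Matrix.mul_one]
    _ = (B * (A * Q)).trace := by rw [h, trace_mul_comm]
    _ = Q.trace := by rw [← Matrix.mul_assoc, hBA, Matrix.one_mul]

theorem permMatrix_mul_eq_mul_permMatrix [NonAssocSemiring R] [DecidableEq m] [DecidableEq n]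
    {A : Matrix m n R} {σ : Perm m} {τ : Perm n} (h : A.submatrix σ τ = A) :
    σ.permMatrix R * A = A * τ.permMatrix R := by
  rw [PEquiv.toMatrix_toPEquiv_mul, PEquiv.mul_toMatrix_toPEquiv]
  calc A.submatrix σ id = (A.submatrix σ τ).submatrix id τ.symm := by simp
    _ = A.submatrix id τ.symm := by rw [h]

theorem card_fixed_eq_of_submatrix_eq_self [CommSemiring R] [CharZero R] [DecidableEq m]
    [DecidableEq n] {A : Matrix m n R} {B : Matrix n m R} (hAB : A * B = 1) (hBA : B * A = 1)
    {σ : Perm m} {τ : Perm n} (h : A.submatrix σ τ = A) :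
    Nat.card {x // σ x = x} = Nat.card {y // τ y = y} := by
  have htrace := trace_eq_of_mul_eq_mul hAB hBA (permMatrix_mul_eq_mul_permMatrix h)
  rw [trace_permutation, trace_permutation] at htrace
  exact Nat.cast_injective htrace

end BrauerPermutationLemma

section IncidenceMatrix

variable {α β : Type*} (r : α → β → Prop) [DecidableRel r]

/-- The 0-1 matrix of an incidence relation between points `α` and blocks `β`, with rows indexed by
points; its entries are rational so that it can be inverted. -/
def incidenceMatrix : Matrix α β ℚ :=
  Matrix.of fun x y => if r x y then 1 else 0

variable [Fintype β]

theorem incidenceMatrix_mul_transpose_apply (x x' : α) :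
    (incidenceMatrix r * (incidenceMatrix r)ᵀ) x x' = #{y | r x y ∧ r x' y} := by
  simp [incidenceMatrix, mul_apply, ← ite_and, and_comm]

variable {r} {l : ℕ}

theorem incidenceMatrix_mul_transpose_eq [DecidableEq α]
    (hpair : Pairwise fun x x' => #{y | r x y ∧ r x' y} = l) :
    incidenceMatrix r * (incidenceMatrix r)ᵀ =
      diagonal (fun x => (#{y | r x y} : ℚ) - l) + (l : ℚ) • vecMulVec 1 1 := by
  ext x x'
  rw [incidenceMatrix_mul_transpose_apply]
  obtain rfl | hne := eq_or_ne x x'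
  · simp
  · simp [hne, hpair hne]

theorem posDef_incidenceMatrix_mul_transpose [Finite α] (hdeg : ∀ x, l < #{y | r x y})
    (hpair : Pairwise fun x x' => #{y | r x y ∧ r x' y} = l) :
    (incidenceMatrix r * (incidenceMatrix r)ᵀ).PosDef := by
  classical
  rw [incidenceMatrix_mul_transpose_eq hpair]
  have hdiag : (diagonal fun x => (#{y | r x y} : ℚ) - l).PosDef :=
    PosDef.diagonal fun x => sub_pos.mpr (mod_cast hdeg x)
  have hones : ((l : ℚ) • vecMulVec (1 : α → ℚ) 1).PosSemidef :=
    (posSemidef_vecMulVec_self_star (1 : α → ℚ)).smul l.cast_nonneg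
  exact hdiag.add_posSemidef hones

theorem card_fixed_points_eq_card_fixed_blocks [Fintype α]
    (hcard : Fintype.card α = Fintype.card β) (hdeg : ∀ x, l < #{y | r x y})
    (hpair : Pairwise fun x x' => #{y | r x y ∧ r x' y} = l)
    {σ : Perm α} {τ : Perm β} (h : ∀ x y, r (σ x) (τ y) ↔ r x y) :
    Nat.card {x // σ x = x} = Nat.card {y // τ y = y} := by
  classical
  set N := incidenceMatrix r
  have hunit : IsUnit (N * Nᵀ).det :=
    (isUnit_iff_isUnit_det _).mp (posDef_incidenceMatrix_mul_transpose hdeg hpair).isUnit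
  have hright : N * (Nᵀ * (N * Nᵀ)⁻¹) = 1 := by
    rw [← Matrix.mul_assoc, mul_nonsing_inv _ hunit]
  have hleft : Nᵀ * (N * Nᵀ)⁻¹ * N = 1 := (mul_eq_one_comm_of_card_eq _ _ _ hcard).mp hright
  have hinv : N.submatrix σ τ = N := by
    ext x y
    simp [N, incidenceMatrix, h]
  exact card_fixed_eq_of_submatrix_eq_self hright hleft hinv

end IncidenceMatrix

/-- Incidence of points and lines in the Fano plane, both labelled by residues mod 7: the line `y`
is the translate by `-y` of the perfect difference set `{1, 2, 4}` (addition in `Fin 7` wraps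
around). The two labellings are those for which `G₀` preserves incidence. -/
def FanoIncident (x y : Fin 7) : Prop := x + y ∈ ({1, 2, 4} : Finset (Fin 7))

instance : DecidableRel FanoIncident := fun x y =>
  inferInstanceAs (Decidable (x + y ∈ ({1, 2, 4} : Finset (Fin 7))))

namespace FanoIncident

theorem card_lines_through (x : Fin 7) : #{y | FanoIncident x y} = 3 := by
  decide +revert

theorem card_lines_through_pair :
    Pairwise fun x x' : Fin 7 => #{y | FanoIncident x y ∧ FanoIncident x' y} = 1 := by
  unfold Pairwise
  decide

theorem apply_iff_apply_of_mem_G₀ {p : Perm (Fin 7) × Perm (Fin 7)} (hp : p ∈ G₀) (x y : Fin 7) :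
    FanoIncident (p.1 x) (p.2 y) ↔ FanoIncident x y := by
  induction hp using Subgroup.closure_induction generalizing x y with
  | mem p hgen => rcases hgen with rfl | rfl | rfl <;> decide +revert
  | one => rfl
  | mul p q _ _ hp hq => exact (hp _ _).trans (hq x y)
  | inv p _ hp => simpa using (hp (p.1⁻¹ x) (p.2⁻¹ y)).symm

end FanoIncident

/-- For every element of `G₀`, the two coordinates have equally many fixed points. -/
theorem fixed_points_eq_of_mem_G₀ :
    ∀ p ∈ G₀, Nat.card {x : Fin 7 // p.1 x = x} = Nat.card {x : Fin 7 // p.2 x = x} := by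
  intro p hp
  have hdeg (x : Fin 7) : 1 < #{y | FanoIncident x y} := by
    simp only [FanoIncident.card_lines_through, Nat.one_lt_ofNat]
  exact card_fixed_points_eq_card_fixed_blocks rfl hdeg FanoIncident.card_lines_through_pair
    (FanoIncident.apply_iff_apply_of_mem_G₀ hp)
end

section
/- Let a, b, c be the permutations of {0,…,6} given in cycle notation by a = (0 1)(2 5), b = (0 2)(4 3), c = (0 4)(1 6), and a' = (0 4)(2 3), b' = (0 1)(4 6), c' = (0 2)(1 5). Let G be the subgroup of Sym(7) × Sym(7) generated by (a,a'), (b,b'), (c,c'), let A = {(σ,τ) ∈ G : σ(0) = 0} and B = {(σ,τ) ∈ G : τ(0) = 0}. Then A and B are Gassmann equivalent subgroups of G (for every conjugacy class C of G, |A ∩ C| = |B ∩ C|), but A and B are not conjugate in G. -/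
open Equiv

/-- A = {(σ,τ) ∈ G₀ : σ 0 = 0}, the point stabilizer in the first action. -/
def A : Subgroup G₀ where
  carrier := {g | (g : Perm (Fin 7) × Perm (Fin 7)).1 0 = 0}
  one_mem' := rfl
  mul_mem' := by
    intro x y hx hy
    simp only [Set.mem_setOf_eq] at *
    simp [Subgroup.coe_mul, Perm.mul_apply, hx, hy]
  inv_mem' := by
    intro x hx
    simp only [Set.mem_setOf_eq] at *
    conv_lhs => rw [← hx]
    simp

/-- B = {(σ,τ) ∈ G₀ : τ 0 = 0}, the point stabilizer in the second action. -/
def B : Subgroup G₀ where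
  carrier := {g | (g : Perm (Fin 7) × Perm (Fin 7)).2 0 = 0}
  one_mem' := rfl
  mul_mem' := by
    intro x y hx hy
    simp only [Set.mem_setOf_eq] at *
    simp [Subgroup.coe_mul, Perm.mul_apply, hx, hy]
  inv_mem' := by
    intro x hx
    simp only [Set.mem_setOf_eq] at *
    conv_lhs => rw [← hx]
    simp

/-!
`G₀` acts by collineations on the points (first coordinate) and on the lines (second coordinate) of
a Fano plane, and `A` and `B` are the stabilizers of a point and of a line. The incidence matrix is
invertible and intertwines the two permutation representations, so every element of `G₀` fixes as
many points as lines. For transitive actions, double counting turns equality of the numbers of fixed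
points into Gassmann equivalence of the stabilizers. On the other hand a conjugate of `B` is
again the stabilizer of a line, whereas `A` fixes no line.
-/

open MulAction

section GassmannEquivalence

variable {G X Y : Type*} [Group G]

/-- Gassmann equivalence of two subgroups, with conjugacy classes written as `conjugatesOf g`.
`Nat.card` counts an infinite intersection as `0`, so the notion is meant for finite `G`. -/
def GassmannEquiv (H K : Subgroup G) : Prop :=
  ∀ g : G, Nat.card ((H : Set G) ∩ conjugatesOf g : Set G) =
    Nat.card ((K : Set G) ∩ conjugatesOf g : Set G)

theorem mem_conjugatesOf_conj_iff {g k : G} (h : G) :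
    MulAut.conj h k ∈ conjugatesOf g ↔ k ∈ conjugatesOf g :=
  have hk : IsConj k (MulAut.conj h k) := isConj_iff.mpr ⟨h, rfl⟩
  ⟨fun hg => hg.trans hk.symm, fun hg => hg.trans hk⟩

variable [MulAction G X] [MulAction G Y]

theorem conj_mem_stabilizer_smul_iff {h k : G} {x : X} :
    MulAut.conj h k ∈ stabilizer G (h • x) ↔ k ∈ stabilizer G x := by
  simp [mem_stabilizer_iff, mul_smul]

theorem nonempty_equiv_stabilizer_inter_conjugatesOf [IsPretransitive G X] (g : G) (x y : X) :
    Nonempty (((stabilizer G x : Set G) ∩ conjugatesOf g : Set G) ≃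
      ((stabilizer G y : Set G) ∩ conjugatesOf g : Set G)) := by
  obtain ⟨h, rfl⟩ := exists_smul_eq G x y
  exact ⟨(MulAut.conj h).toEquiv.subtypeEquiv fun _ =>
    (and_congr conj_mem_stabilizer_smul_iff (mem_conjugatesOf_conj_iff h)).symm⟩

theorem nonempty_equiv_fixedBy_of_isConj {g k : G} (hgk : IsConj g k) :
    Nonempty (fixedBy X k ≃ fixedBy X g) := by
  obtain ⟨h, rfl⟩ := isConj_iff.mp hgk
  refine ⟨((toPerm h).subtypeEquiv fun x => ?_).symm⟩
  simp [mem_fixedBy, mul_smul]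

/-- Both sides count the pairs `(y, k)` with `k • y = y` and `k` conjugate to `g`: all the fibres
over `X` are equinumerous because the action is transitive, all those over the conjugacy class
because conjugate elements have equinumerous sets of fixed points. -/
theorem card_mul_card_stabilizer_inter_conjugatesOf [IsPretransitive G X] (g : G) (x : X) :
    Nat.card X * Nat.card ((stabilizer G x : Set G) ∩ conjugatesOf g : Set G) =
      Nat.card (conjugatesOf g) * Nat.card (fixedBy X g) := by
  have e (y : X) := (nonempty_equiv_stabilizer_inter_conjugatesOf g x y).some
  have f (k : conjugatesOf g) := (nonempty_equiv_fixedBy_of_isConj (X := X) k.2).some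
  let swapPairs : (Σ y : X, ((stabilizer G y : Set G) ∩ conjugatesOf g : Set G)) ≃
      Σ k : conjugatesOf g, fixedBy X (k : G) :=
    { toFun p := ⟨⟨p.2, p.2.2.2⟩, p.1, p.2.2.1⟩
      invFun p := ⟨p.2, p.1, p.2.2, p.1.2⟩ }
  rw [← Nat.card_prod, ← Nat.card_prod]
  exact Nat.card_congr <| (Equiv.sigmaEquivProd _ _).symm.trans <|
    (Equiv.sigmaCongrRight e).trans <| swapPairs.trans <|
    (Equiv.sigmaCongrRight f).trans <| Equiv.sigmaEquivProd _ _

theorem gassmannEquiv_stabilizer [Finite X] [IsPretransitive G X] [IsPretransitive G Y]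
    (hfix : ∀ g : G, Nat.card (fixedBy X g) = Nat.card (fixedBy Y g)) (x : X) (y : Y) :
    GassmannEquiv (stabilizer G x) (stabilizer G y) := by
  intro g
  have hcard : Nat.card X = Nat.card Y := by simpa using hfix 1
  have hpos : 0 < Nat.card X := Nat.card_pos_iff.mpr ⟨⟨x⟩, ‹_›⟩
  refine Nat.eq_of_mul_eq_mul_left hpos ?_
  rw [card_mul_card_stabilizer_inter_conjugatesOf, hcard,
    card_mul_card_stabilizer_inter_conjugatesOf, hfix]

theorem stabilizer_eq_stabilizer_inv_smul_of_map_conj_eq {g : G} {x : X} {y : Y}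
    (h : (stabilizer G x).map (MulAut.conj g).toMonoidHom = stabilizer G y) :
    stabilizer G x = stabilizer G (g⁻¹ • y) := by
  refine Subgroup.map_injective (MulAut.conj g).injective (h.trans ?_)
  simpa using stabilizer_smul_eq_stabilizer_map_conj g (g⁻¹ • y)

end GassmannEquivalence

/-- `M` conjugates the permutation matrix of `τ` into that of `σ`, and the trace of a permutation
matrix counts fixed points. -/
theorem ncard_fixedPoints_eq_of_submatrix_eq {m n R : Type*} [Fintype m] [Fintype n]
    [DecidableEq m] [DecidableEq n] [CommSemiring R] [CharZero R] {σ : Perm m} {τ : Perm n}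
    {M : Matrix m n R} {N : Matrix n m R} (hMN : M * N = 1) (hNM : N * M = 1)
    (hM : M.submatrix σ τ = M) :
    (Function.fixedPoints σ).ncard = (Function.fixedPoints τ).ncard := by
  have hcomm : σ.permMatrix R * M = M * τ.permMatrix R := by
    rw [PEquiv.toMatrix_toPEquiv_mul, PEquiv.mul_toMatrix_toPEquiv]
    nth_rw 2 [← hM]
    simp only [Matrix.submatrix_submatrix, Function.comp_id, Equiv.self_comp_symm]
  have htrace : (σ.permMatrix R).trace = (τ.permMatrix R).trace :=
    calc (σ.permMatrix R).trace = (σ.permMatrix R * M * N).trace := by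
          rw [Matrix.mul_assoc, hMN, Matrix.mul_one]
      _ = (N * M * τ.permMatrix R).trace := by
          rw [hcomm, Matrix.trace_mul_comm, Matrix.mul_assoc]
      _ = (τ.permMatrix R).trace := by rw [hNM, Matrix.one_mul]
  simpa [Matrix.trace_permutation] using htrace

/-- The seven points of the Fano plane: `Fin 7` with the first-coordinate action of `G₀`. -/
def FanoPoint : Type := Fin 7

instance : Fintype FanoPoint := inferInstanceAs (Fintype (Fin 7))

instance : DecidableEq FanoPoint := inferInstanceAs (DecidableEq (Fin 7))

instance (i : ℕ) : OfNat FanoPoint i := inferInstanceAs (OfNat (Fin 7) i)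

instance : MulAction G₀ FanoPoint :=
  MulAction.compHom (Fin 7) ((MonoidHom.fst _ _).comp G₀.subtype)

/-- The seven lines of the Fano plane: `Fin 7` with the second-coordinate action of `G₀`. -/
def FanoLine : Type := Fin 7

instance : Fintype FanoLine := inferInstanceAs (Fintype (Fin 7))

instance : DecidableEq FanoLine := inferInstanceAs (DecidableEq (Fin 7))

instance (j : ℕ) : OfNat FanoLine j := inferInstanceAs (OfNat (Fin 7) j)

instance : MulAction G₀ FanoLine :=
  MulAction.compHom (Fin 7) ((MonoidHom.snd _ _).comp G₀.subtype)

/-- The set of points on a line of the Fano plane. The incident pairs are the 21 elements of the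
orbit of (point `1`, line `0`) under `G₀`; the other orbit on pairs has 28 elements. -/
def pointsOn : FanoLine → Finset FanoPoint :=
  (![{1, 2, 4}, {0, 1, 3}, {0, 2, 6}, {1, 5, 6}, {0, 4, 5}, {3, 4, 6}, {2, 3, 5}] :
    Fin 7 → Finset FanoPoint)

/-- The point-line incidence matrix of the Fano plane. -/
def fanoMatrix : Matrix FanoPoint FanoLine ℚ :=
  Matrix.of fun p l => if p ∈ pointsOn l then 1 else 0

/-- The inverse of the incidence matrix `M`. Two points `p`, `q` lie on `1 + 2 δ_pq` common lines,
so `M * Mᵀ = 2 + J` with `J` the all-ones matrix, and `M * J = 3 J`; hence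
`M⁻¹ = Mᵀ / 2 - J / 6`. -/
def fanoMatrixInv : Matrix FanoLine FanoPoint ℚ :=
  Matrix.of fun l p => (if p ∈ pointsOn l then 1 else 0) / 2 - 1 / 6

theorem card_common_lines (p q : FanoPoint) :
    ({l | p ∈ pointsOn l ∧ q ∈ pointsOn l} : Finset FanoLine).card = if p = q then 3 else 1 := by
  revert p q
  decide

theorem fanoMatrix_mul_fanoMatrixInv :
    fanoMatrix * fanoMatrixInv = (1 : Matrix FanoPoint FanoPoint ℚ) := by
  ext p q
  have hpq := card_common_lines p q
  have hp := card_common_lines p p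
  simp only [and_self, if_true] at hp
  calc (fanoMatrix * fanoMatrixInv) p q
      = ∑ l, ((if p ∈ pointsOn l ∧ q ∈ pointsOn l then 1 else 0) / 2 -
          (if p ∈ pointsOn l then 1 else 0) / 6 : ℚ) := by
        rw [Matrix.mul_apply]
        refine Finset.sum_congr rfl fun l _ => ?_
        simp only [fanoMatrix, fanoMatrixInv, Matrix.of_apply, ite_and]
        split_ifs <;> norm_num
    _ = (if p = q then 3 else 1 : ℕ) / 2 - (3 : ℕ) / 6 := by
        rw [Finset.sum_sub_distrib, ← Finset.sum_div, ← Finset.sum_div, Finset.sum_boole,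
          Finset.sum_boole, hpq, hp]
    _ = (1 : Matrix FanoPoint FanoPoint ℚ) p q := by
        rw [Matrix.one_apply]
        split_ifs <;> norm_num

theorem smul_mem_pointsOn_smul_iff (g : G₀) (p : FanoPoint) (l : FanoLine) :
    g • p ∈ pointsOn (g • l) ↔ p ∈ pointsOn l := by
  obtain ⟨g, hg⟩ := g
  induction hg using Subgroup.closure_induction generalizing p l with
  | mem g hg =>
    obtain rfl | rfl | rfl := hg <;> revert p l <;> decide
  | one => rfl
  | mul g h _ _ ihg ihh => exact (ihg _ _).trans (ihh p l)
  | inv g hg ih =>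
    let γ : G₀ := ⟨g, hg⟩
    simpa only [γ, smul_inv_smul] using! (ih (γ⁻¹ • p) (γ⁻¹ • l)).symm

theorem card_fixedBy_fanoPoint_eq_card_fixedBy_fanoLine (g : G₀) :
    Nat.card (fixedBy FanoPoint g) = Nat.card (fixedBy FanoLine g) := by
  have hinvariant : fanoMatrix.submatrix (toPerm g) (toPerm g) = fanoMatrix := by
    ext p l
    simp [fanoMatrix, smul_mem_pointsOn_smul_iff]
  exact ncard_fixedPoints_eq_of_submatrix_eq fanoMatrix_mul_fanoMatrixInv
    ((Matrix.mul_eq_one_comm_of_card_eq _ _ _ rfl).mp fanoMatrix_mul_fanoMatrixInv) hinvariant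

/-- The generator `(a, a')` of `G₀`. -/
def genA : G₀ := ⟨(a, a'), Subgroup.subset_closure (by simp)⟩

/-- The generator `(b, b')` of `G₀`. -/
def genB : G₀ := ⟨(b, b'), Subgroup.subset_closure (by simp)⟩

/-- The generator `(c, c')` of `G₀`. -/
def genC : G₀ := ⟨(c, c'), Subgroup.subset_closure (by simp)⟩

instance : IsPretransitive G₀ FanoPoint := by
  refine (isPretransitive_iff_base (G := G₀) (0 : FanoPoint)).mpr fun p => ?_
  exact ⟨(![1, genA, genB, genB * genC, genC, genA * genB, genC * genA] : Fin 7 → G₀) p,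
    by revert p; decide⟩

instance : IsPretransitive G₀ FanoLine := by
  refine (isPretransitive_iff_base (G := G₀) (0 : FanoLine)).mpr fun l => ?_
  exact ⟨(![1, genB, genC, genA * genC, genA, genC * genB, genB * genA] : Fin 7 → G₀) l,
    by revert l; decide⟩

theorem A_eq_stabilizer : A = stabilizer G₀ (0 : FanoPoint) := rfl

theorem B_eq_stabilizer : B = stabilizer G₀ (0 : FanoLine) := rfl

theorem not_stabilizer_fanoPoint_le_stabilizer_fanoLine (l : FanoLine) :
    ¬ stabilizer G₀ (0 : FanoPoint) ≤ stabilizer G₀ l := by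
  intro hl
  -- These three elements fix the lines 2, 3, 5, the lines 3, 4, 6 and the lines 1, 5, 6.
  have haba : (genA * genB * genA) • l = l :=
    hl (show (genA * genB * genA) • (0 : FanoPoint) = 0 by decide)
  have hbcb : (genB * genC * genB) • l = l :=
    hl (show (genB * genC * genB) • (0 : FanoPoint) = 0 by decide)
  have hcac : (genC * genA * genC) • l = l :=
    hl (show (genC * genA * genC) • (0 : FanoPoint) = 0 by decide)
  clear hl
  revert l
  decide

/-- `A` and `B` are Gassmann equivalent subgroups of `G₀`, but they are not conjugate. -/
theorem gassmann_not_conjugate :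
    (∀ g : G₀,
      Nat.card ((A : Set G₀) ∩ {x : G₀ | IsConj g x} : Set G₀) =
      Nat.card ((B : Set G₀) ∩ {x : G₀ | IsConj g x} : Set G₀)) ∧
    ¬ ∃ x : G₀, Subgroup.map (MulAut.conj x).toMonoidHom A = B := by
  constructor
  · exact gassmannEquiv_stabilizer card_fixedBy_fanoPoint_eq_card_fixedBy_fanoLine _ _
  · rintro ⟨x, hx⟩
    rw [A_eq_stabilizer, B_eq_stabilizer] at hx
    have hA := stabilizer_eq_stabilizer_inv_smul_of_map_conj_eq hx
    exact not_stabilizer_fanoPoint_le_stabilizer_fanoLine _ hA.le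
end

section
/- Let a, b, c be the permutations of {0,…,6} given in cycle notation by a = (0 1)(2 5), b = (0 2)(4 3), c = (0 4)(1 6), and a' = (0 4)(2 3), b' = (0 1)(4 6), c' = (0 2)(1 5). Let G be the subgroup of Sym(7) × Sym(7) generated by (a,a'), (b,b'), (c,c'). Then G has order 168, both coordinate actions of G on {0,…,6} are transitive, and the stabilizers A = {(σ,τ) ∈ G : σ(0) = 0} and B = {(σ,τ) ∈ G : τ(0) = 0} each have order 24 (hence index 7 in G). -/
open Equiv

/-!
Label the points and the lines of the Fano plane by the nonzero vectors of `𝔽₂³`, a point lying on a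
line when the two vectors are orthogonal. For a suitable numbering of the vectors by `0, …, 6`, the
three generating pairs are collineations. A collineation fixing the three vertices of a triangle is
trivial, because a vector of `𝔽₂³` is determined by which members of a basis it is orthogonal to.
Explicit products of generators show that `G₀` is transitive on ordered triangles, hence simply
transitive, and there are `7 · 6 · 4 = 168` of these. Transitivity on points and on lines follows,
and the stabilizers are then given by the orbit-stabilizer theorem.
-/

section GroupAction

variable {G α : Type*} [Group G]

lemma exists_apply_eq_of_base (f : G →* Perm α) (x₀ : α) (h : ∀ y, ∃ g, f g x₀ = y)
    (x y : α) : ∃ g, f g x = y := by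
  let := MulAction.compHom α f
  exact ((MulAction.isPretransitive_iff_base x₀).2 h).exists_smul_eq x y

lemma index_eq_card_of_mem_iff_apply_eq (f : G →* Perm α) {x₀ : α} (h : ∀ y, ∃ g, f g x₀ = y)
    {H : Subgroup G} (hH : ∀ g, g ∈ H ↔ f g x₀ = x₀) : H.index = Nat.card α := by
  let := MulAction.compHom α f
  have := (MulAction.isPretransitive_iff_base x₀).2 h
  have hstab : H = MulAction.stabilizer G x₀ := Subgroup.ext hH
  rw [hstab, MulAction.index_stabilizer_of_transitive]

end GroupAction

section Incidence

variable {P L : Type*} (I : P → L → Prop)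

/-- The collineations of the incidence structure `I` between points `P` and lines `L`, each given
by its action on points together with its action on lines. -/
def collineationGroup : Subgroup (Perm P × Perm L) where
  carrier := {p | ∀ x l, I (p.1 x) (p.2 l) ↔ I x l}
  one_mem' _ _ := Iff.rfl
  mul_mem' {p q} hp hq x l := (hp (q.1 x) (q.2 l)).trans (hq x l)
  inv_mem' {p} hp x l := by
    simpa using (hp (p.1⁻¹ x) (p.2⁻¹ l)).symm

/-- The points `x`, `y`, `z` form a triangle: no line passes through all three. -/
def IsTriangle (x y z : P) : Prop :=
  ∀ l, ¬ (I x l ∧ I y l ∧ I z l)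

variable {I} {p : Perm P × Perm L}

lemma IsTriangle.ne {x y z : P} (h : IsTriangle I x y z) (hI : ∀ x y, ∃ l, I x l ∧ I y l) :
    x ≠ y := by
  rintro rfl
  obtain ⟨l, hx, hz⟩ := hI x z
  exact h l ⟨hx, hx, hz⟩

lemma IsTriangle.map (hp : p ∈ collineationGroup I) {x y z : P} (h : IsTriangle I x y z) :
    IsTriangle I (p.1 x) (p.1 y) (p.1 z) := by
  intro l hl
  obtain ⟨m, rfl⟩ := p.2.surjective l
  exact h m (hl.imp (hp x m).1 (And.imp (hp y m).1 (hp z m).1))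

lemma isTriangle_map_iff (hp : p ∈ collineationGroup I) {x y z : P} :
    IsTriangle I (p.1 x) (p.1 y) (p.1 z) ↔ IsTriangle I x y z :=
  ⟨fun h ↦ by simpa using h.map (inv_mem hp), IsTriangle.map hp⟩

lemma collineation_eq_one_of_fixes (hp : p ∈ collineationGroup I) {S : Set P}
    (hS : ∀ l m, (∀ x ∈ S, I x l ↔ I x m) → l = m) (hI : ∀ x y, (∀ l, I x l ↔ I y l) → x = y)
    (hfix : ∀ x ∈ S, p.1 x = x) : p = 1 := by
  have hlines (l : L) : p.2 l = l :=
    hS _ _ fun x hx ↦ by simpa only [hfix x hx] using hp x l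
  have hpoints (x : P) : p.1 x = x :=
    hI _ _ fun l ↦ by simpa only [hlines] using hp x l
  exact Prod.ext (Equiv.ext hpoints) (Equiv.ext hlines)

end Incidence

namespace Fano

open Matrix

/-- The numbering of the nonzero vectors of `𝔽₂³`, used for points and for lines alike. It is chosen
so that the generators of `G₀` preserve orthogonality. -/
def vec : Fin 7 → Fin 3 → ZMod 2 :=
  ![![1, 1, 1], ![1, 1, 0], ![1, 0, 1], ![0, 0, 1], ![0, 1, 1], ![1, 0, 0], ![0, 1, 0]]

/-- Incidence in the Fano plane: the point `x` lies on the line `l` when their vectors are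
orthogonal. -/
abbrev Incident (x l : Fin 7) : Prop :=
  vec x ⬝ᵥ vec l = 0

instance (x y z : Fin 7) : Decidable (IsTriangle Incident x y z) :=
  inferInstanceAs (Decidable (∀ l, ¬ (Incident x l ∧ Incident y l ∧ Incident z l)))

lemma point_ext : ∀ x y, (∀ l, Incident x l ↔ Incident y l) → x = y := by
  decide

lemma line_ext_of_base :
    ∀ l m, (∀ x ∈ ({0, 1, 2} : Set (Fin 7)), Incident x l ↔ Incident x m) → l = m := by
  simp only [Set.mem_insert_iff, Set.mem_singleton_iff, forall_eq_or_imp, forall_eq]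
  decide

lemma isTriangle_zero_one_two : IsTriangle Incident 0 1 2 := by
  decide

lemma exists_line_through : ∀ x y, ∃ l, Incident x l ∧ Incident y l := by
  decide

lemma exists_isTriangle_side : ∀ l, ∃ x y z, IsTriangle Incident x y z ∧
    ∀ m, Incident x m → Incident y m → m = l := by
  decide

lemma card_triangles :
    Nat.card {t : Fin 7 × Fin 7 × Fin 7 // IsTriangle Incident t.1 t.2.1 t.2.2} = 168 := by
  rw [Nat.card_eq_fintype_card]
  decide +kernel

lemma G₀_le_collineationGroup : G₀ ≤ collineationGroup Incident := by
  refine (Subgroup.closure_le _).2 ?_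
  rintro _ (rfl | rfl | rfl) <;> intro x l <;> revert x l <;> decide

/-- The action of `G₀` on the points of the Fano plane, by the first coordinate. -/
def pointAction : G₀ →* Perm (Fin 7) :=
  (MonoidHom.fst _ _).comp G₀.subtype

/-- The action of `G₀` on the lines of the Fano plane, by the second coordinate. -/
def lineAction : G₀ →* Perm (Fin 7) :=
  (MonoidHom.snd _ _).comp G₀.subtype

lemma incident_map_iff (g : G₀) (x l : Fin 7) :
    Incident (pointAction g x) (lineAction g l) ↔ Incident x l :=
  G₀_le_collineationGroup g.2 x l

lemma isTriangle_pointAction_iff (g : G₀) {x y z : Fin 7} :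
    IsTriangle Incident (pointAction g x) (pointAction g y) (pointAction g z) ↔
      IsTriangle Incident x y z :=
  isTriangle_map_iff (G₀_le_collineationGroup g.2)

lemma eq_one_of_fixes_base {g : G₀} (h₀ : pointAction g 0 = 0) (h₁ : pointAction g 1 = 1)
    (h₂ : pointAction g 2 = 2) : g = 1 := by
  refine Subtype.ext (collineation_eq_one_of_fixes (G₀_le_collineationGroup g.2)
    line_ext_of_base point_ext ?_)
  rintro _ (rfl | rfl | rfl)
  exacts [h₀, h₁, h₂]

/-- The generator `(a, a')` of `G₀`. -/
def genA : G₀ := ⟨(a, a'), Subgroup.subset_closure (by simp)⟩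

/-- The generator `(b, b')` of `G₀`. -/
def genB : G₀ := ⟨(b, b'), Subgroup.subset_closure (by simp)⟩

/-- The generator `(c, c')` of `G₀`. -/
def genC : G₀ := ⟨(c, c'), Subgroup.subset_closure (by simp)⟩

lemma exists_pointAction_zero_eq (x : Fin 7) : ∃ g, pointAction g 0 = x := by
  have : ∀ x, ∃ g ∈ [1, genA, genB, genC, genA * genB, genB * genC, genC * genA],
      pointAction g 0 = x := by decide
  exact (this x).imp fun _ ↦ And.right

-- On points, `aba`, `bcb` and `cac` are `(1 5)(3 4)`, `(1 6)(2 3)` and `(2 5)(4 6)`.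
lemma exists_fix_zero_pointAction_one_eq {y : Fin 7} (hy : y ≠ 0) :
    ∃ g, pointAction g 0 = 0 ∧ pointAction g 1 = y := by
  have : ∀ y ≠ 0, ∃ g ∈ [1,
      genA * genB * genA,
      genB * genC * genB,
      (genC * genA * genC) * (genA * genB * genA),
      (genC * genA * genC) * (genB * genC * genB),
      (genB * genC * genB) * (genC * genA * genC) * (genA * genB * genA)],
      pointAction g 0 = 0 ∧ pointAction g 1 = y := by decide
  exact (this y hy).imp fun _ ↦ And.right

-- On points, `cac` and `cbabc` are `(2 5)(4 6)` and `(2 6)(4 5)`.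
lemma exists_fix_zero_one_pointAction_two_eq {z : Fin 7} (hz : IsTriangle Incident 0 1 z) :
    ∃ g, pointAction g 0 = 0 ∧ pointAction g 1 = 1 ∧ pointAction g 2 = z := by
  have : ∀ z, IsTriangle Incident 0 1 z → ∃ g ∈ [1,
      genC * genA * genC,
      genC * genB * genA * genB * genC,
      (genC * genA * genC) * (genC * genB * genA * genB * genC)],
      pointAction g 0 = 0 ∧ pointAction g 1 = 1 ∧ pointAction g 2 = z := by decide
  exact (this z hz).imp fun _ ↦ And.right

lemma exists_pointAction_base_eq {x y z : Fin 7} (h : IsTriangle Incident x y z) :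
    ∃ g, pointAction g 0 = x ∧ pointAction g 1 = y ∧ pointAction g 2 = z := by
  obtain ⟨g, rfl⟩ := exists_pointAction_zero_eq x
  obtain ⟨y, rfl⟩ := (pointAction g).surjective y
  obtain ⟨z, rfl⟩ := (pointAction g).surjective z
  rw [isTriangle_pointAction_iff] at h
  obtain ⟨k, hk₀, rfl⟩ := exists_fix_zero_pointAction_one_eq (h.ne exists_line_through).symm
  obtain ⟨z, rfl⟩ := (pointAction k).surjective z
  have h' : IsTriangle Incident 0 1 z := by
    rwa [← isTriangle_pointAction_iff k, hk₀]
  obtain ⟨m, hm₀, hm₁, rfl⟩ := exists_fix_zero_one_pointAction_two_eq h'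
  exact ⟨g * k * m, by simp [hm₀, hm₁, hk₀]⟩

/-- The image of the base triangle `(0, 1, 2)` under `g`. Its bijectivity expresses that `G₀` is
simply transitive on ordered triangles. -/
def baseTriangleImage (g : G₀) :
    {t : Fin 7 × Fin 7 × Fin 7 // IsTriangle Incident t.1 t.2.1 t.2.2} :=
  ⟨(pointAction g 0, pointAction g 1, pointAction g 2),
    (isTriangle_pointAction_iff g).2 isTriangle_zero_one_two⟩

lemma baseTriangleImage_bijective : Function.Bijective baseTriangleImage := by
  constructor
  · intro g h hgh
    simp only [baseTriangleImage, Subtype.mk.injEq, Prod.mk.injEq] at hgh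
    obtain ⟨h₀, h₁, h₂⟩ := hgh
    refine inv_mul_eq_one.1 (eq_one_of_fixes_base ?_ ?_ ?_) <;>
      simp [← h₀, ← h₁, ← h₂]
  · rintro ⟨⟨x, y, z⟩, h⟩
    obtain ⟨g, rfl, rfl, rfl⟩ := exists_pointAction_base_eq h
    exact ⟨g, rfl⟩

lemma card_G₀ : Nat.card G₀ = 168 :=
  (Nat.card_eq_of_bijective _ baseTriangleImage_bijective).trans card_triangles

lemma exists_lineAction_one_eq (l : Fin 7) : ∃ g, lineAction g 1 = l := by
  obtain ⟨x, y, z, ht, hl⟩ := exists_isTriangle_side l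
  obtain ⟨g, rfl, rfl, -⟩ := exists_pointAction_base_eq ht
  exact ⟨g, hl _ ((incident_map_iff g 0 1).2 (by decide)) ((incident_map_iff g 1 1).2 (by decide))⟩

lemma exists_pointAction_eq (x y : Fin 7) : ∃ g, pointAction g x = y :=
  exists_apply_eq_of_base pointAction 0 exists_pointAction_zero_eq x y

lemma exists_lineAction_eq (l m : Fin 7) : ∃ g, lineAction g l = m :=
  exists_apply_eq_of_base lineAction 1 exists_lineAction_one_eq l m

lemma index_A : A.index = 7 := by
  simpa using index_eq_card_of_mem_iff_apply_eq pointAction exists_pointAction_zero_eq (H := A)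
    fun _ ↦ Iff.rfl

lemma index_B : B.index = 7 := by
  simpa using index_eq_card_of_mem_iff_apply_eq lineAction (exists_lineAction_eq 0) (H := B)
    fun _ ↦ Iff.rfl

lemma card_eq_of_index_eq_seven {H : Subgroup G₀} (hH : H.index = 7) : Nat.card H = 24 := by
  have := H.card_mul_index
  rw [hH, card_G₀] at this
  lia

end Fano

/-- `G₀` has order 168, both coordinate actions on `Fin 7` are transitive, and the
stabilizers `A` and `B` each have order 24, hence index 7. -/
theorem order_transitive_stabilizers :
    Nat.card G₀ = 168 ∧
    (∀ x y : Fin 7, ∃ p ∈ G₀, p.1 x = y) ∧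
    (∀ x y : Fin 7, ∃ p ∈ G₀, p.2 x = y) ∧
    Nat.card A = 24 ∧ Nat.card B = 24 ∧ A.index = 7 ∧ B.index = 7 := by
  refine ⟨Fano.card_G₀, fun x y ↦ ?_, fun x y ↦ ?_, Fano.card_eq_of_index_eq_seven Fano.index_A,
    Fano.card_eq_of_index_eq_seven Fano.index_B, Fano.index_A, Fano.index_B⟩
  · obtain ⟨g, hg⟩ := Fano.exists_pointAction_eq x y
    exact ⟨g, g.2, hg⟩
  · obtain ⟨g, hg⟩ := Fano.exists_lineAction_eq x y
    exact ⟨g, g.2, hg⟩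
end

section
/- The set of pairs of real numbers (a, b) satisfying simultaneously 3a² + 4b² = 1 and a² + 4ab + 2b² = 0 has exactly four elements. -/
/-!
A quadratic form takes each positive value at exactly two opposite points of any line on which it is
positive. The discriminant of `x² + 4xy + 2y²` is positive, so this form vanishes on exactly two
lines through the origin, and each of them meets the ellipse `3x² + 4y² = 1` in two points.
-/

open Submodule

section LevelSetOnLines

variable {V : Type*} [AddCommGroup V] [Module ℝ V] {Q : QuadraticForm ℝ V} {u v : V}
  {r : ℝ}

theorem setOf_mem_span_singleton_and_map_eq (hu : 0 < Q u) (hr : 0 < r) :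
    {w | w ∈ span ℝ {u} ∧ Q w = r} = {√(r / Q u) • u, -(√(r / Q u) • u)} := by
  have map_smul_eq_iff (t : ℝ) : Q (t • u) = r ↔ t = √(r / Q u) ∨ t = -√(r / Q u) := by
    rw [QuadraticMap.map_smul, smul_eq_mul, ← eq_div_iff hu.ne', ← sq,
      ← sq_eq_sq_iff_eq_or_eq_neg, Real.sq_sqrt (div_pos hr hu).le]
  ext w
  constructor
  · rintro ⟨hw, hQw⟩
    obtain ⟨t, rfl⟩ := mem_span_singleton.mp hw
    obtain rfl | rfl := (map_smul_eq_iff t).mp hQw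
    · exact Or.inl rfl
    · exact Or.inr (neg_smul _ u)
  · rw [← neg_smul]
    rintro (rfl | rfl)
    · exact ⟨mem_span_singleton.mpr ⟨_, rfl⟩, (map_smul_eq_iff _).mpr (Or.inl rfl)⟩
    · exact ⟨mem_span_singleton.mpr ⟨_, rfl⟩, (map_smul_eq_iff _).mpr (Or.inr rfl)⟩

theorem ncard_setOf_mem_span_singleton_and_map_eq (hu : 0 < Q u) (hr : 0 < r) :
    {w | w ∈ span ℝ {u} ∧ Q w = r}.ncard = 2 := by
  have hu₀ : u ≠ 0 := by
    rintro rfl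
    exact hu.ne' (QuadraticMap.map_zero Q)
  have hpoint : √(r / Q u) • u ≠ 0 :=
    smul_ne_zero (Real.sqrt_ne_zero'.mpr (div_pos hr hu)) hu₀
  have : IsAddTorsionFree V := .of_isTorsionFree ℝ V
  rw [setOf_mem_span_singleton_and_map_eq hu hr, Set.ncard_pair (self_ne_neg.mpr hpoint)]

theorem ncard_setOf_mem_two_lines_and_map_eq (hu : 0 < Q u) (hv : 0 < Q v) (hr : 0 < r)
    (huv : Disjoint (span ℝ {u}) (span ℝ {v})) :
    {w | (w ∈ span ℝ {u} ∨ w ∈ span ℝ {v}) ∧ Q w = r}.ncard = 4 := by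
  have disjoint_level_sets :
      Disjoint {w | w ∈ span ℝ {u} ∧ Q w = r} {w | w ∈ span ℝ {v} ∧ Q w = r} := by
    rw [Set.disjoint_left]
    rintro w ⟨hwu, hQw⟩ ⟨hwv, -⟩
    rw [disjoint_def.mp huv w hwu hwv, QuadraticMap.map_zero] at hQw
    exact hr.ne hQw
  have hcard_u := ncard_setOf_mem_span_singleton_and_map_eq hu hr
  have hcard_v := ncard_setOf_mem_span_singleton_and_map_eq hv hr
  simp only [or_and_right, Set.ofPred_or]
  rw [Set.ncard_union_eq disjoint_level_sets (Set.finite_of_ncard_pos (by lia))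
    (Set.finite_of_ncard_pos (by lia)), hcard_u, hcard_v]

end LevelSetOnLines

section BinaryForm

theorem mem_span_singleton_mk_one_iff {R : Type*} [CommSemiring R] {r : R} {p : R × R} :
    p ∈ span R {(r, 1)} ↔ p.1 = r * p.2 := by
  rw [mem_span_singleton]
  constructor
  · rintro ⟨t, rfl⟩
    simp [mul_comm]
  · intro h
    exact ⟨p.2, by ext <;> simp [h, mul_comm]⟩

theorem disjoint_span_singleton_mk_one {K : Type*} [Field K] {r s : K} (h : r ≠ s) :
    Disjoint (span K {(r, (1 : K))}) (span K {(s, (1 : K))}) := by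
  rw [disjoint_span_singleton' (by simp), mem_span_singleton_mk_one_iff]
  simpa using h.symm

theorem binary_quadratic_eq_zero_iff_mem_span {K : Type*} [Field K] [NeZero (2 : K)]
    {a b c s : K} (ha : a ≠ 0) (hs : discrim a b c = s * s) (p : K × K) :
    a * p.1 ^ 2 + b * p.1 * p.2 + c * p.2 ^ 2 = 0 ↔
      p ∈ span K {((-b + s) / (2 * a), (1 : K))} ∨
        p ∈ span K {((-b - s) / (2 * a), (1 : K))} := by
  have hdiscrim : discrim a (b * p.2) (c * p.2 ^ 2) = (s * p.2) * (s * p.2) := by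
    rw [discrim] at hs ⊢
    linear_combination p.2 ^ 2 * hs
  calc a * p.1 ^ 2 + b * p.1 * p.2 + c * p.2 ^ 2 = 0
      ↔ a * (p.1 * p.1) + b * p.2 * p.1 + c * p.2 ^ 2 = 0 := by ring_nf
    _ ↔ p.1 = (-(b * p.2) + s * p.2) / (2 * a) ∨ p.1 = (-(b * p.2) - s * p.2) / (2 * a) :=
        quadratic_eq_zero_iff ha hdiscrim p.1
    _ ↔ _ := by
        simp only [mem_span_singleton_mk_one_iff, div_mul_eq_mul_div, add_mul, sub_mul, neg_mul]

theorem ncard_setOf_posDef_eq_and_binary_quadratic_eq_zero {Q : QuadraticForm ℝ (ℝ × ℝ)}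
    (hQ : Q.PosDef) {a b c r : ℝ} (ha : a ≠ 0) (hdiscrim : 0 < discrim a b c)
    (hr : 0 < r) :
    {p : ℝ × ℝ | Q p = r ∧ a * p.1 ^ 2 + b * p.1 * p.2 + c * p.2 ^ 2 = 0}.ncard = 4 := by
  set s := √(discrim a b c)
  have hs : discrim a b c = s * s := (Real.mul_self_sqrt hdiscrim.le).symm
  have hs_pos : 0 < s := Real.sqrt_pos.mpr hdiscrim
  have roots_ne : (-b + s) / (2 * a) ≠ (-b - s) / (2 * a) := by
    rw [Ne, div_left_inj' (by simpa using ha)]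
    linarith
  simp only [binary_quadratic_eq_zero_iff_mem_span ha hs, and_comm (a := Q _ = r)]
  exact ncard_setOf_mem_two_lines_and_map_eq (hQ _ (by simp)) (hQ _ (by simp)) hr
    (disjoint_span_singleton_mk_one roots_ne)

end BinaryForm

/-- The system 3a² + 4b² = 1, a² + 4ab + 2b² = 0 has exactly four real solutions (a, b). -/
theorem four_norm_preserving_coeffs :
    {ab : ℝ × ℝ | 3 * ab.1 ^ 2 + 4 * ab.2 ^ 2 = 1 ∧
      ab.1 ^ 2 + 4 * ab.1 * ab.2 + 2 * ab.2 ^ 2 = 0}.ncard = 4 := by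
  let Q : QuadraticForm ℝ (ℝ × ℝ) :=
    ((3 : ℝ) • QuadraticMap.sq).prod ((4 : ℝ) • QuadraticMap.sq)
  have hQ_apply (p : ℝ × ℝ) : Q p = 3 * p.1 ^ 2 + 4 * p.2 ^ 2 := by
    simp [Q, sq]
  have hsq : (QuadraticMap.sq : QuadraticForm ℝ ℝ).PosDef := fun _ hx => mul_self_pos.mpr hx
  have hQ : Q.PosDef := (hsq.smul three_pos).prod (hsq.smul four_pos)
  have hdiscrim : 0 < discrim (1 : ℝ) 4 2 := by norm_num [discrim]
  simpa only [hQ_apply, one_mul] using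
    ncard_setOf_posDef_eq_and_binary_quadratic_eq_zero hQ one_ne_zero hdiscrim one_pos
end
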